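/- (Lemma 2(c)) Under the augmented push-sum dynamics with the ergodicity hypothesis, for every player i ∈ {1,…,n}, ∑_{k=0}^{∞} ρ(k) ‖z_i(k+1) − x̄(k)‖ < ∞. -/

import Mathlib

open Filter Topology

/-- Backward product `Φ(k,t) = A(k) A(k−1) ⋯ A(k−t)`. -/
noncomputable def backProd {N : ℕ} (A : ℕ → Matrix (Fin N) (Fin N) ℝ) (k t : ℕ) :
    Matrix (Fin N) (Fin N) ℝ :=
  ((List.range (t + 1)).map fun s => A (k - s)).prod

lemma psaux_sum_dite {V : Type*} [AddCommMonoid V] {n N : ℕ} (h : n ≤ N) (f : Fin n → V) :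
    ∑ j : Fin N, (if h : (j : ℕ) < n then f ⟨j, h⟩ else 0) = ∑ i, f i := by
  obtain ⟨m, rfl⟩ := Nat.exists_eq_add_of_le h
  rw [Fin.sum_univ_add]
  simp

lemma psaux_backProd_succ {N : ℕ} (A : ℕ → Matrix (Fin N) (Fin N) ℝ) (k t : ℕ) :
    backProd A k (t + 1) = backProd A k t * A (k - (t + 1)) := by
  unfold backProd
  rw [List.range_succ (n := t + 1)]
  simp

lemma psaux_backProd_zero {N : ℕ} (A : ℕ → Matrix (Fin N) (Fin N) ℝ) (k : ℕ) :
    backProd A k 0 = A k := by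
  simp [backProd]

/-- sum is preserved by a column stochastic matrix -/
lemma psaux_colsum {V : Type*} [AddCommGroup V] [Module ℝ V] {N : ℕ}
    (A : Matrix (Fin N) (Fin N) ℝ) (hA : ∀ j, ∑ i, A i j = 1) (u : Fin N → V) :
    ∑ j, ∑ m, A j m • u m = ∑ m, u m := by
  rw [Finset.sum_comm]
  refine Finset.sum_congr rfl fun m _ => ?_
  rw [← Finset.sum_smul, hA, one_smul]

/-- geometric accumulation -/
noncomputable def psauxE (lam c : ℝ) (D : ℕ → ℝ) (k : ℕ) : ℝ :=
  lam ^ k * c + ∑ s ∈ Finset.range k, lam ^ s * D (k - 1 - s)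

lemma psauxE_zero (lam c : ℝ) (D : ℕ → ℝ) : psauxE lam c D 0 = c := by
  simp [psauxE]

lemma psauxE_succ (lam c : ℝ) (D : ℕ → ℝ) (k : ℕ) :
    psauxE lam c D (k + 1) = lam * psauxE lam c D k + D k := by
  unfold psauxE
  rw [Finset.sum_range_succ', mul_add, Finset.mul_sum]
  have : ∀ s ∈ Finset.range k, lam ^ (s + 1) * D (k + 1 - 1 - (s + 1))
      = lam * (lam ^ s * D (k - 1 - s)) := by
    intro s hs
    have : k + 1 - 1 - (s + 1) = k - 1 - s := by omega
    rw [this]; ring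
  rw [Finset.sum_congr rfl this]
  simp
  ring

lemma psauxE_nonneg (lam c : ℝ) (D : ℕ → ℝ) (hl : 0 ≤ lam) (hc : 0 ≤ c) (hD : ∀ k, 0 ≤ D k)
    (k : ℕ) : 0 ≤ psauxE lam c D k := by
  unfold psauxE
  have : 0 ≤ ∑ s ∈ Finset.range k, lam ^ s * D (k - 1 - s) :=
    Finset.sum_nonneg fun s _ => mul_nonneg (pow_nonneg hl _) (hD _)
  positivity

lemma psauxE_bdd (lam c : ℝ) (D : ℕ → ℝ) (hl : 0 ≤ lam) (hl1 : lam < 1) (M : ℝ)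
    (hc : c ≤ M / (1 - lam)) (hD : ∀ k, D k ≤ M) (k : ℕ) : psauxE lam c D k ≤ M / (1 - lam) := by
  induction k with
  | zero => rw [psauxE_zero]; exact hc
  | succ k ih =>
    rw [psauxE_succ]
    have h1 : (1 - lam) ≠ 0 := by linarith
    have h2 : lam * (M / (1 - lam)) + M = M / (1 - lam) := by field_simp; ring
    have := mul_le_mul_of_nonneg_left ih hl
    linarith [hD k]

lemma psauxE_sq_summable (lam c : ℝ) (D : ℕ → ℝ) (hl : 0 ≤ lam) (hl1 : lam < 1)
    (hD : Summable fun k => D k ^ 2) : Summable fun k => psauxE lam c D k ^ 2 := by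
  have h1 : 0 < 1 - lam := by linarith
  have step : ∀ k, psauxE lam c D (k + 1) ^ 2
      ≤ lam * psauxE lam c D k ^ 2 + D k ^ 2 / (1 - lam) := by
    intro k
    rw [psauxE_succ]
    set a := psauxE lam c D k
    have hb : D k = (1 - lam) * (D k / (1 - lam)) := by field_simp
    have hb2 : D k ^ 2 / (1 - lam) = (1 - lam) * (D k / (1 - lam)) ^ 2 := by field_simp
    rw [hb2]
    conv_lhs => rw [hb]
    set b := D k / (1 - lam)
    nlinarith [mul_nonneg (mul_nonneg hl h1.le) (sq_nonneg (a - b))]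
  refine summable_of_sum_range_le (c := (c ^ 2 + (∑' k, D k ^ 2) / (1 - lam)) / (1 - lam))
    (fun k => sq_nonneg _) fun K => ?_
  rw [le_div_iff₀ h1]
  have hS : ∑ k ∈ Finset.range (K + 1), psauxE lam c D k ^ 2 ≤
      lam * ∑ k ∈ Finset.range K, psauxE lam c D k ^ 2 + (∑' k, D k ^ 2) / (1 - lam) + c ^ 2 := by
    rw [Finset.sum_range_succ', psauxE_zero]
    have h3 : ∑ k ∈ Finset.range K, D k ^ 2 ≤ ∑' k, D k ^ 2 :=
      hD.sum_le_tsum _ fun _ _ => sq_nonneg _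
    have h4 := Finset.sum_le_sum fun k (_ : k ∈ Finset.range K) => step k
    rw [Finset.sum_add_distrib, ← Finset.mul_sum, ← Finset.sum_div] at h4
    have h5 := div_le_div_of_nonneg_right h3 h1.le
    linarith
  rw [Finset.sum_range_succ] at hS
  nlinarith [sq_nonneg (psauxE lam c D K)]

lemma psaux_generic {V : Type*} [NormedAddCommGroup V] [NormedSpace ℝ V] {N : ℕ}
    (A : ℕ → Matrix (Fin N) (Fin N) ℝ) (hAcol : ∀ k j, ∑ i, A k i j = 1)
    (B' lam : ℝ) (φ : ℕ → Fin N → ℝ)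
    (herg : ∀ k t, t ≤ k → ∀ i j : Fin N, |backProd A k t i j - φ k i| ≤ B' * lam ^ t)
    (u d : ℕ → Fin N → V)
    (hu : ∀ k j, u (k + 1) j = ∑ m, A k j m • u k m + d k j) (k : ℕ) (i : Fin N) :
    ‖∑ m, A k i m • u k m - φ k i • ∑ j, u k j‖ ≤
      B' * psauxE lam (∑ j, ‖u 0 j‖) (fun k => ∑ j, ‖d k j‖) k := by
  have bd : ∀ t, t ≤ k → ∀ g : Fin N → V,
      ‖∑ j, (backProd A k t i j - φ k i) • g j‖ ≤ B' * lam ^ t * ∑ j, ‖g j‖ := by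
    intro t ht g
    refine (norm_sum_le _ _).trans ?_
    rw [Finset.mul_sum]
    refine Finset.sum_le_sum fun j _ => ?_
    rw [norm_smul, Real.norm_eq_abs]
    exact mul_le_mul_of_nonneg_right (herg k t ht i j) (norm_nonneg _)
  have key : ∀ t, t ≤ k → ‖∑ m, A k i m • u k m - φ k i • ∑ j, u k j‖ ≤
      ‖∑ j, (backProd A k t i j - φ k i) • u (k - t) j‖ +
        B' * ∑ s ∈ Finset.range t, lam ^ s * ∑ j, ‖d (k - 1 - s) j‖ := by
    intro t
    induction t with
    | zero =>
      intro _
      simp [psaux_backProd_zero, sub_smul, Finset.sum_sub_distrib, Finset.smul_sum]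
    | succ t ih =>
      intro ht
      refine (ih (by omega)).trans ?_
      have e1 : k - t = (k - (t + 1)) + 1 := by omega
      have e2 : k - 1 - t = k - (t + 1) := by omega
      have e3 : ∑ j, (backProd A k t i j - φ k i) • u (k - t) j =
          ∑ j, (backProd A k (t + 1) i j - φ k i) • u (k - (t + 1)) j +
          ∑ j, (backProd A k t i j - φ k i) • d (k - (t + 1)) j := by
        rw [e1]
        set q := k - (t + 1) with hq
        simp only [hu, smul_add, Finset.sum_add_distrib]
        congr 1
        simp only [sub_smul, Finset.sum_sub_distrib]
        congr 1
        · rw [psaux_backProd_succ]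
          simp only [Matrix.mul_apply, Finset.sum_smul, Finset.smul_sum, smul_smul, ← hq]
          rw [Finset.sum_comm]
        · rw [← Finset.smul_sum, ← Finset.smul_sum, psaux_colsum _ (hAcol q)]
      rw [e3, Finset.sum_range_succ, e2]
      have := bd t (by omega) (d (k - (t + 1)))
      have := norm_add_le (∑ j, (backProd A k (t + 1) i j - φ k i) • u (k - (t + 1)) j)
        (∑ j, (backProd A k t i j - φ k i) • d (k - (t + 1)) j)
      rw [mul_add, ← mul_assoc B' (lam ^ t)]
      linarith
  refine (key k le_rfl).trans ?_
  have := bd k le_rfl (u (k - k))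
  rw [Nat.sub_self] at this ⊢
  unfold psauxE
  rw [mul_add, ← mul_assoc]
  linarith

lemma psaux_alpha_sq (l : ℕ → ℕ) (s2 : ℕ) (hl0 : l 0 = 0) (hl : ∀ k, l k ≤ l (k + 1))
    (hl2 : ∀ k, l (k + 1) ≤ l k + s2) (ρ : ℕ → ℝ) (hρ : Summable fun t => ρ t ^ 2) :
    Summable fun k => (∑ t ∈ Finset.Ico (l k) (l (k + 1)), ρ t) ^ 2 := by
  have hm : ∀ K, ∑ k ∈ Finset.range K, (∑ t ∈ Finset.Ico (l k) (l (k + 1)), ρ t ^ 2)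
      = ∑ t ∈ Finset.range (l K), ρ t ^ 2 := by
    intro K
    induction K with
    | zero => simp [hl0]
    | succ K ih =>
      rw [Finset.sum_range_succ, ih, Finset.sum_range_add_sum_Ico _ (hl K)]
  refine summable_of_sum_range_le (c := s2 * ∑' t, ρ t ^ 2) (fun k => sq_nonneg _) fun K => ?_
  have h1 : ∀ k ∈ Finset.range K, (∑ t ∈ Finset.Ico (l k) (l (k + 1)), ρ t) ^ 2 ≤
      s2 * ∑ t ∈ Finset.Ico (l k) (l (k + 1)), ρ t ^ 2 := by
    intro k _
    refine sq_sum_le_card_mul_sum_sq.trans ?_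
    have : (Finset.Ico (l k) (l (k + 1))).card ≤ s2 := by
      rw [Nat.card_Ico]; have := hl2 k; omega
    exact mul_le_mul_of_nonneg_right (by exact_mod_cast this)
      (Finset.sum_nonneg fun _ _ => sq_nonneg _)
  refine (Finset.sum_le_sum h1).trans ?_
  rw [← Finset.mul_sum, hm]
  exact mul_le_mul_of_nonneg_left (hρ.sum_le_tsum _ fun _ _ => sq_nonneg _) (Nat.cast_nonneg _)

/-- projection displacement -/
lemma psaux_proj {V : Type*} [NormedAddCommGroup V] (a g b : V)
    (h : ‖a - g - b‖ ≤ ‖a - g - a‖) : ‖b - a‖ ≤ 2 * ‖g‖ := by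
  have h1 : b - a = -(a - g - b) + (-g) := by abel
  have h2 : ‖a - g - a‖ = ‖g‖ := by
    rw [show a - g - a = -g by abel, norm_neg]
  rw [h1]
  refine (norm_add_le _ _).trans ?_
  rw [norm_neg, norm_neg]
  linarith

/-- Lemma 2(c): under the augmented push-sum dynamics with the ergodicity hypothesis,
the ρ-weighted consensus error of each player is summable:
`∑ₖ ρ(k) ‖z_i(k+1) − x̄(k)‖ < ∞`. -/
theorem pushsum_consensus_weighted_summable
    (n N p : ℕ) (hn : 0 < n) (hnN : n ≤ N)
    (X : Fin n → Set (EuclideanSpace ℝ (Fin p)))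
    -- nonempty convex compact action sets
    (hXne : ∀ i, (X i).Nonempty)
    (hXconv : ∀ i, Convex ℝ (X i))
    (hXcomp : ∀ i, IsCompact (X i))
    -- the game mappings, L-Lipschitz on ℝ^p × ℝ^p
    (F : Fin n → EuclideanSpace ℝ (Fin p) → EuclideanSpace ℝ (Fin p) →
      EuclideanSpace ℝ (Fin p))
    (L : ℝ) (hLpos : 0 < L)
    (hFlip : ∀ i xi xi' z z',
      ‖F i xi z - F i xi' z'‖ ≤ L * Real.sqrt (‖xi - xi'‖ ^ 2 + ‖z - z'‖ ^ 2))
    -- nonnegative column-stochastic matrices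
    (A : ℕ → Matrix (Fin N) (Fin N) ℝ)
    (hAnn : ∀ k i j, 0 ≤ A k i j)
    (hAcol : ∀ k j, ∑ i, A k i j = 1)
    -- states
    (v w : ℕ → Fin N → EuclideanSpace ℝ (Fin p))
    (y : ℕ → Fin N → ℝ)
    (x z : ℕ → Fin n → EuclideanSpace ℝ (Fin p))
    -- initialization
    (hx0 : ∀ i, x 0 i ∈ X i)
    (hv0p : ∀ i : Fin n, v 0 (Fin.castLE hnN i) = x 0 i)
    (hy0p : ∀ i : Fin n, y 0 (Fin.castLE hnN i) = 1)
    (hv0v : ∀ j : Fin N, n ≤ (j : ℕ) → v 0 j = 0)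
    (hy0v : ∀ j : Fin N, n ≤ (j : ℕ) → y 0 j = 0)
    -- activation sets
    (Aset : ℕ → Finset (Fin n))
    (hAsetne : ∀ k, (Aset k).Nonempty)
    (σ1 : ℕ) (hσ1 : 1 ≤ σ1)
    (hcover : ∀ k, ∀ i : Fin n, ∃ u, k + 1 ≤ u ∧ u ≤ k + σ1 ∧ i ∈ Aset u)
    -- counters
    (l : Fin n → ℕ → ℕ) (σ2 : ℕ) (hσ2 : 1 ≤ σ2)
    (hl0 : ∀ i, l i 0 = 0)
    (hlact : ∀ i k, i ∈ Aset k → l i k + 1 ≤ l i (k + 1) ∧ l i (k + 1) ≤ l i k + σ2)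
    (hlstay : ∀ i k, i ∉ Aset k → l i (k + 1) = l i k)
    -- stepsize generating sequence
    (ρ : ℕ → ℝ)
    (hρpos : ∀ t, 0 < ρ t)
    (hρmono : ∀ t, ρ (t + 1) ≤ ρ t)
    (hρsq : Summable fun t => ρ t ^ 2)
    (α : Fin n → ℕ → ℝ)
    (hα : ∀ i k, α i k = ∑ t ∈ Finset.Ico (l i k) (l i (k + 1)), ρ t)
    -- push-sum dynamics
    (hw : ∀ k, ∀ j : Fin N, w (k + 1) j = ∑ m, A k j m • v k m)
    (hy : ∀ k, ∀ j : Fin N, y (k + 1) j = ∑ m, A k j m * y k m)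
    (hz : ∀ k, ∀ i : Fin n,
      z (k + 1) i = (y (k + 1) (Fin.castLE hnN i))⁻¹ • w (k + 1) (Fin.castLE hnN i))
    -- the projected pseudo-gradient update for active players
    (hxup : ∀ k, ∀ i : Fin n, i ∈ Aset k →
      x (k + 1) i ∈ X i ∧
      ∀ u ∈ X i,
        ‖x k i - α i k • F i (x k i) (z (k + 1) i) - x (k + 1) i‖ ≤
        ‖x k i - α i k • F i (x k i) (z (k + 1) i) - u‖)
    (hxstay : ∀ k, ∀ i : Fin n, i ∉ Aset k → x (k + 1) i = x k i)
    (hv : ∀ k, ∀ j : Fin N, v (k + 1) j =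
      w (k + 1) j + (if h : (j : ℕ) < n then x (k + 1) ⟨j, h⟩ - x k ⟨j, h⟩ else 0))
    -- ergodicity hypothesis
    (B' lam η : ℝ) (hB' : 0 < B') (hlam : lam ∈ Set.Ioo (0 : ℝ) 1)
    (hη : η ∈ Set.Ioc (0 : ℝ) 1)
    (φvec : ℕ → Fin N → ℝ)
    (hφnn : ∀ k i, 0 ≤ φvec k i)
    (hφsum : ∀ k, ∑ i, φvec k i = 1)
    (herg : ∀ k t, t ≤ k → ∀ i j : Fin N, |backProd A k t i j - φvec k i| ≤ B' * lam ^ t)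
    (hylb : ∀ i : Fin n, ∀ k, 1 ≤ k → η ≤ y k (Fin.castLE hnN i)) :
    ∀ i : Fin n,
      Summable (fun k => ρ k * ‖z (k + 1) i - (n : ℝ)⁻¹ • ∑ j, x k j‖) := by
  -- x stays in X
  have hxX : ∀ k i, x k i ∈ X i := by
    intro k
    induction k with
    | zero => exact hx0
    | succ k ih =>
      intro i
      by_cases hi : i ∈ Aset k
      · exact (hxup k i hi).1
      · rw [hxstay k i hi]; exact ih i
  have hbd : ∀ i, ∃ M, ∀ a ∈ X i, ‖a‖ ≤ M := fun i => (hXcomp i).isBounded.exists_norm_le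
  choose M0 hM0 using hbd
  have hxM0 : ∀ k i, ‖x k i‖ ≤ M0 i := fun k i => hM0 i _ (hxX k i)
  have hM0nn : ∀ i, 0 ≤ M0 i := fun i => (norm_nonneg _).trans (hxM0 0 i)
  set M := ∑ i, M0 i with hM
  have hMnn : 0 ≤ M := Finset.sum_nonneg fun i _ => hM0nn i
  have hM0M : ∀ i, M0 i ≤ M := fun i =>
    Finset.single_le_sum (fun i _ => hM0nn i) (Finset.mem_univ i)
  have hsumx : ∀ k, ∑ i, ‖x k i‖ ≤ M := fun k => Finset.sum_le_sum fun i _ => hxM0 k i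
  have hn' : (0 : ℝ) < n := by exact_mod_cast hn
  obtain ⟨hlam0, hlam1⟩ := hlam
  obtain ⟨hη0, -⟩ := hη
  -- displacement
  let D : ℕ → ℝ := fun k => ∑ i, ‖x (k + 1) i - x k i‖
  have hDnn : ∀ k, 0 ≤ D k := fun k => Finset.sum_nonneg fun _ _ => norm_nonneg _
  have hDM : ∀ k, D k ≤ 2 * M := by
    intro k
    have : D k ≤ ∑ i, (‖x (k + 1) i‖ + ‖x k i‖) := Finset.sum_le_sum fun i _ => norm_sub_le _ _
    rw [Finset.sum_add_distrib] at this
    linarith [hsumx k, hsumx (k + 1)]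
  let d : ℕ → Fin N → EuclideanSpace ℝ (Fin p) := fun k j =>
    if h : (j : ℕ) < n then x (k + 1) ⟨j, h⟩ - x k ⟨j, h⟩ else 0
  have hdD : ∀ k, ∑ j, ‖d k j‖ = D k := by
    intro k
    refine Eq.trans ?_ (psaux_sum_dite hnN (fun i => ‖x (k + 1) i - x k i‖))
    refine Finset.sum_congr rfl fun j _ => ?_
    by_cases h : (j : ℕ) < n <;> simp [d, h]
  have hvd : ∀ k j, v (k + 1) j = ∑ m, A k j m • v k m + d k j := by
    intro k j
    rw [hv, hw]
  have hv0 : ∀ j : Fin N, v 0 j = if h : (j : ℕ) < n then x 0 ⟨j, h⟩ else 0 := by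
    intro j
    by_cases h : (j : ℕ) < n
    · simp only [h, dif_pos]; exact hv0p ⟨j, h⟩
    · simp only [h, dif_neg, not_false_eq_true]; exact hv0v j (by omega)
  have hy0 : ∀ j : Fin N, y 0 j = if h : (j : ℕ) < n then 1 else 0 := by
    intro j
    by_cases h : (j : ℕ) < n
    · simp only [h, dif_pos]; exact hy0p ⟨j, h⟩
    · simp only [h, dif_neg, not_false_eq_true]; exact hy0v j (by omega)
  have hvsum : ∀ k, ∑ j, v k j = ∑ i, x k i := by
    intro k
    induction k with
    | zero => rw [← psaux_sum_dite hnN (x 0)]; exact Finset.sum_congr rfl fun j _ => hv0 j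
    | succ k ih =>
      simp only [hvd, Finset.sum_add_distrib]
      rw [psaux_colsum _ (hAcol k), ih]
      have := psaux_sum_dite hnN (fun i => x (k + 1) i - x k i)
      simp only [d, this, Finset.sum_sub_distrib]
      abel
  have hy0n : ∑ j, y 0 j = n := by
    have := psaux_sum_dite hnN (fun _ : Fin n => (1 : ℝ))
    rw [Finset.sum_congr rfl fun j _ => hy0 j, this]; simp
  have hysum : ∀ k, ∑ j, y k j = n := by
    intro k
    induction k with
    | zero => exact hy0n
    | succ k ih =>
      rw [← ih, ← psaux_colsum _ (hAcol k) (y k)]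
      exact Finset.sum_congr rfl fun j _ => hy k j
  have hv0norm : ∑ j, ‖v 0 j‖ ≤ M := by
    refine le_trans (le_of_eq ?_) (hsumx 0)
    rw [← psaux_sum_dite hnN (fun i => ‖x 0 i‖)]
    refine Finset.sum_congr rfl fun j _ => ?_
    rw [hv0 j]
    by_cases h : (j : ℕ) < n <;> simp [h]
  have hy0norm : ∑ j, ‖y 0 j‖ = n := by
    rw [← hy0n]
    refine Finset.sum_congr rfl fun j _ => ?_
    rw [hy0 j]
    by_cases h : (j : ℕ) < n <;> simp [h]
  let xb : ℕ → EuclideanSpace ℝ (Fin p) := fun k => (n : ℝ)⁻¹ • ∑ j, x k j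
  have hxb : ∀ k, n * ‖xb k‖ ≤ M := by
    intro k
    simp only [xb]
    rw [norm_smul, norm_inv, Real.norm_natCast, mul_inv_cancel_left₀ hn'.ne']
    exact (norm_sum_le _ _).trans (hsumx k)
  let E : ℕ → ℝ := psauxE lam (2 * M) D
  have hEnn : ∀ k, 0 ≤ E k := psauxE_nonneg _ _ _ hlam0.le (by linarith) hDnn
  -- main consensus bound
  have hmain : ∀ k i, ‖z (k + 1) i - xb k‖ ≤ B' / η * E k := by
    intro k i
    set I := Fin.castLE hnN i with hI
    have h1 := psaux_generic A hAcol B' lam φvec herg v d hvd k I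
    have h2 := psaux_generic A hAcol B' lam φvec herg y (fun _ _ => 0)
      (fun k j => by simp [hy]) k I
    simp only [smul_eq_mul] at h2
    rw [← hy, hysum, hy0norm] at h2
    rw [← hw, hvsum] at h1
    simp only [hdD] at h1
    have hyη : η ≤ y (k + 1) I := hylb i (k + 1) (by omega)
    have hypos : 0 < y (k + 1) I := hη0.trans_le hyη
    have e0 : ∑ j, x k j = (n : ℝ) • xb k := by
      simp only [xb]; rw [smul_inv_smul₀ hn'.ne']
    have e1 : z (k + 1) i - xb k = (y (k + 1) I)⁻¹ • ((w (k + 1) I - φvec k I • ∑ j, x k j)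
        - (y (k + 1) I - φvec k I * n) • xb k) := by
      rw [hz, e0, sub_smul, smul_smul, sub_sub_sub_cancel_right, smul_sub, inv_smul_smul₀ hypos.ne']
    have h3 : ‖(w (k + 1) I - φvec k I • ∑ j, x k j) - (y (k + 1) I - φvec k I * n) • xb k‖
        ≤ B' * E k := by
      refine (norm_sub_le _ _).trans ?_
      rw [norm_smul]
      have h4 : ‖y (k + 1) I - φvec k I * n‖ * ‖xb k‖ ≤ B' * (lam ^ k * M) := by
        refine (mul_le_mul_of_nonneg_right h2 (norm_nonneg _)).trans ?_
        have : psauxE lam (n : ℝ) (fun k => ∑ j : Fin N, ‖(0 : ℝ)‖) k = lam ^ k * n := by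
          simp [psauxE]
        rw [this, mul_assoc, mul_assoc]
        have := hxb k
        gcongr
      have h5 : psauxE lam (∑ j, ‖v 0 j‖) (fun k => D k) k + lam ^ k * M ≤ E k := by
        simp only [E, psauxE]
        have := mul_le_mul_of_nonneg_left hv0norm (pow_nonneg hlam0.le k)
        linarith
      have h6 := mul_le_mul_of_nonneg_left h5 hB'.le
      rw [mul_add] at h6
      linarith
    rw [e1, norm_smul, norm_inv, Real.norm_of_nonneg hypos.le]
    have h7 : (y (k + 1) I)⁻¹ ≤ η⁻¹ := inv_anti₀ hη0 hyη
    calc _ ≤ η⁻¹ * (B' * E k) := mul_le_mul h7 h3 (norm_nonneg _) (inv_nonneg.2 hη0.le)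
      _ = _ := by ring
  -- z bounded
  have h1l : 0 < 1 - lam := by linarith
  have hEb : ∀ k, E k ≤ 2 * M / (1 - lam) := psauxE_bdd _ _ _ hlam0.le hlam1 _
    (by rw [le_div_iff₀ h1l]; nlinarith) hDM
  obtain ⟨Z, hZ⟩ : ∃ Z, ∀ k i, ‖z (k + 1) i‖ ≤ Z := by
    refine ⟨B' / η * (2 * M / (1 - lam)) + (n : ℝ)⁻¹ * M, fun k i => ?_⟩
    have h1 := (hmain k i).trans (mul_le_mul_of_nonneg_left (hEb k) (by positivity))
    have h2 : ‖xb k‖ ≤ (n : ℝ)⁻¹ * M := by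
      rw [← div_eq_inv_mul, le_div_iff₀ hn', mul_comm]; exact hxb k
    have h3 : z (k + 1) i = (z (k + 1) i - xb k) + xb k := by abel
    rw [h3]
    exact (norm_add_le _ _).trans (add_le_add h1 h2)
  have hF : ∀ i, ∃ C, 0 ≤ C ∧ ∀ k, ‖F i (x k i) (z (k + 1) i)‖ ≤ C := by
    intro i
    refine ⟨L * Real.sqrt (M ^ 2 + Z ^ 2) + ‖F i 0 0‖, by positivity, fun k => ?_⟩
    have h1 := hFlip i (x k i) 0 (z (k + 1) i) 0
    simp only [sub_zero] at h1
    have h2 : Real.sqrt (‖x k i‖ ^ 2 + ‖z (k + 1) i‖ ^ 2) ≤ Real.sqrt (M ^ 2 + Z ^ 2) := by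
      have := (hxM0 k i).trans (hM0M i)
      have := hZ k i
      gcongr
    have h3 := mul_le_mul_of_nonneg_left h2 hLpos.le
    have h4 := norm_sub_norm_le (F i (x k i) (z (k + 1) i)) (F i 0 0)
    linarith
  choose C hC0 hC using hF
  -- displacement is square summable
  have hαnn : ∀ i k, 0 ≤ α i k := fun i k => by
    rw [hα]; exact Finset.sum_nonneg fun t _ => (hρpos t).le
  have hdisp : ∀ k i, ‖x (k + 1) i - x k i‖ ≤ 2 * (α i k * C i) := by
    intro k i
    by_cases hi : i ∈ Aset k
    · have h1 := psaux_proj _ _ _ ((hxup k i hi).2 (x k i) (hxX k i))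
      rw [norm_smul, Real.norm_of_nonneg (hαnn i k)] at h1
      have := mul_le_mul_of_nonneg_left (hC i k) (hαnn i k)
      linarith
    · rw [hxstay k i hi]
      have := mul_nonneg (hαnn i k) (hC0 i)
      simpa using this
  have hαsq : ∀ i, Summable fun k => α i k ^ 2 := by
    intro i
    simp only [hα]
    refine psaux_alpha_sq (l i) σ2 (hl0 i) (fun k => ?_) (fun k => ?_) ρ hρsq
    · by_cases hi : i ∈ Aset k
      · have := hlact i k hi; omega
      · rw [hlstay i k hi]
    · by_cases hi : i ∈ Aset k
      · exact (hlact i k hi).2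
      · rw [hlstay i k hi]; omega
  have hDsq : Summable fun k => D k ^ 2 := by
    have hs : Summable fun k => (n : ℝ) * ∑ i, 4 * C i ^ 2 * α i k ^ 2 :=
      (summable_sum fun i _ => (hαsq i).mul_left _).mul_left _
    refine Summable.of_nonneg_of_le (fun k => sq_nonneg _) (fun k => ?_) hs
    refine sq_sum_le_card_mul_sum_sq.trans ?_
    rw [Finset.card_univ, Fintype.card_fin]
    refine mul_le_mul_of_nonneg_left (Finset.sum_le_sum fun i _ => ?_) hn'.le
    calc _ ≤ (2 * (α i k * C i)) ^ 2 := pow_le_pow_left₀ (norm_nonneg _) (hdisp k i) 2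
      _ = _ := by ring
  have hEsq : Summable fun k => E k ^ 2 := psauxE_sq_summable _ _ _ hlam0.le hlam1 hDsq
  intro i
  refine Summable.of_nonneg_of_le (fun k => mul_nonneg (hρpos k).le (norm_nonneg _)) (fun k => ?_)
    ((hρsq.add hEsq).mul_left (B' / η))
  have h1 := mul_le_mul_of_nonneg_left (hmain k i) (hρpos k).le
  refine h1.trans ?_
  have h2 : ρ k * E k ≤ ρ k ^ 2 + E k ^ 2 := by nlinarith [sq_nonneg (ρ k - E k), sq_nonneg (ρ k), sq_nonneg (E k)]
  have := mul_le_mul_of_nonneg_left h2 (div_nonneg hB'.le hη0.le)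
  calc _ = B' / η * (ρ k * E k) := by ring
    _ ≤ _ := this
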